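/- Let R₀ ∈ ℂ^{m×n} be in GB(s) form with s + t ≤ n, and suppose max_{s < j ≤ s+t} ‖R₀((s+1):m, j)‖₂² ≥ max_{s+t < j ≤ n} ‖R₀(:, j)‖₂² =: μ (with μ := 0 if s+t = n). Let C ⊆ {s+1, …, s+t} be a set of b indices that contains some index attaining max_{s < j ≤ s+t} ‖R₀((s+1):m, j)‖₂², let B ∈ ℂ^{(m−s)×b} be the submatrix of R₀ with rows (s+1):m and columns indexed by C, and set δ := max{ ‖R₀((s+1):m, j)‖₂² : j ∈ {s+1,…,s+t} \ C } (with δ := 0 if C = {s+1,…,s+t}). If Ū ∈ ℂ^{(m−s)×(m−s)} is unitary, Π_b ∈ ℂ^{b×b} is a permutation matrix, and R̂ = Ū* B Π_b is in GB(1) form, then |R̂(1,1)|² ≥ δ and |R̂(1,1)|² ≥ μ. -/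

import Mathlib

open Matrix

/-- `tailNorm R i j` is the Euclidean norm of the subvector of column `j` of `R`
consisting of the (0-based) rows `i, i+1, …, m-1`, i.e. `‖R((i+1):m, j)‖₂` in 1-based notation. -/
noncomputable def tailNorm {m n : ℕ} (R : Matrix (Fin m) (Fin n) ℂ) (i : ℕ) (j : Fin n) : ℝ :=
  Real.sqrt (∑ p : Fin m, if i ≤ p.val then ‖R p j‖ ^ 2 else 0)

/-- `R` is in `k`-Golub–Businger form: its first `k` columns are upper-triangular, and for each
(1-based) `i ≤ k`, `|R(i,i)|` equals the maximum of `‖R(i:m, j)‖₂` over the columns `j ≥ i`. -/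
def IsGB {m n : ℕ} (k : ℕ) (R : Matrix (Fin m) (Fin n) ℂ) : Prop :=
  (∀ (p : Fin m) (q : Fin n), q.val < k → q.val < p.val → R p q = 0) ∧
  ∀ (i : ℕ), i < k → ∀ (him : i < m) (hin : i < n),
    IsGreatest {x : ℝ | ∃ j : Fin n, i ≤ j.val ∧ x = tailNorm R i j}
      ‖R ⟨i, him⟩ ⟨i, hin⟩‖

/-- The `p`-th of the last `m - s` rows of a matrix with `m` rows, so that
`R.submatrix (trailingRow s) id` is `R((s+1):m, :)` in 1-based notation. The truncated subtraction
is harmless: for `m ≤ s` the domain is empty. -/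
def trailingRow {m : ℕ} (s : ℕ) (p : Fin (m - s)) : Fin m :=
  ⟨s + p.val, by have := p.isLt; omega⟩

theorem trailingRow_injective {m : ℕ} (s : ℕ) :
    Function.Injective (trailingRow s : Fin (m - s) → Fin m) :=
  fun _ _ hpq => Fin.ext (Nat.add_left_cancel (Fin.ext_iff.mp hpq))

theorem mem_range_trailingRow {m s : ℕ} {p : Fin m} :
    p ∈ Set.range (trailingRow s) ↔ s ≤ p.val := by
  constructor
  · rintro ⟨q, rfl⟩
    exact Nat.le_add_right s q
  · intro hp
    exact ⟨⟨p.val - s, by omega⟩, Fin.ext (Nat.add_sub_of_le hp)⟩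

theorem sum_trailingRow {M : Type*} [AddCommMonoid M] {m : ℕ} (s : ℕ) (f : Fin m → M) :
    ∑ p : Fin (m - s), f (trailingRow s p) = ∑ p : Fin m, if s ≤ p.val then f p else 0 := by
  refine Finset.sum_of_injOn (trailingRow s) (trailingRow_injective s).injOn
    (fun _ _ => Finset.mem_coe.mpr (Finset.mem_univ _)) (fun p _ hp => if_neg ?_) (fun p _ => ?_)
  · simpa [← mem_range_trailingRow] using hp
  · exact (if_pos (mem_range_trailingRow.mp ⟨p, rfl⟩)).symm

section TailNorm

variable {m n b : ℕ}

theorem tailNorm_nonneg (R : Matrix (Fin m) (Fin n) ℂ) (i : ℕ) (j : Fin n) :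
    0 ≤ tailNorm R i j :=
  Real.sqrt_nonneg _

theorem tailNorm_zero_eq_norm_toLp (R : Matrix (Fin m) (Fin n) ℂ) (j : Fin n) :
    tailNorm R 0 j = ‖WithLp.toLp 2 (R.col j)‖ := by
  simp [tailNorm, EuclideanSpace.norm_eq]

theorem tailNorm_zero_submatrix_trailingRow (R : Matrix (Fin m) (Fin n) ℂ) (s : ℕ)
    (c : Fin b → Fin n) (q : Fin b) :
    tailNorm (R.submatrix (trailingRow s) c) 0 q = tailNorm R s (c q) := by
  simp only [tailNorm, Nat.zero_le, if_true, submatrix_apply]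
  rw [sum_trailingRow s fun p => ‖R p (c q)‖ ^ 2]

theorem tailNorm_zero_unitary_mul {U : Matrix (Fin m) (Fin m) ℂ}
    (hU : U ∈ unitaryGroup (Fin m) ℂ) (R : Matrix (Fin m) (Fin n) ℂ) (j : Fin n) :
    tailNorm (U * R) 0 j = tailNorm R 0 j := by
  have hU' : toEuclideanCLM (𝕜 := ℂ) U ∈ unitary _ := Unitary.map_mem _ hU
  rw [tailNorm_zero_eq_norm_toLp, tailNorm_zero_eq_norm_toLp]
  exact ContinuousLinearMap.norm_map_of_mem_unitary hU' (WithLp.toLp 2 (R.col j))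

theorem tailNorm_mul_permMatrix (R : Matrix (Fin m) (Fin n) ℂ) (σ : Equiv.Perm (Fin n))
    (i : ℕ) (j : Fin n) :
    tailNorm (R * σ.permMatrix ℂ) i (σ j) = tailNorm R i j := by
  rw [Equiv.Perm.permMatrix, PEquiv.mul_toMatrix_toPEquiv]
  simp only [tailNorm, submatrix_apply, id, Equiv.symm_apply_apply]

theorem IsGB.tailNorm_le_norm_diag {k i : ℕ} {R : Matrix (Fin m) (Fin n) ℂ} (hR : IsGB k R)
    (hik : i < k) (him : i < m) (hin : i < n) {j : Fin n} (hij : i ≤ j.val) :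
    tailNorm R i j ≤ ‖R ⟨i, him⟩ ⟨i, hin⟩‖ :=
  (hR.2 i hik him hin).2 ⟨j, hij, rfl⟩

theorem tailNorm_le_norm_pivot_of_isGB_one {s : ℕ} (hsm : s < m) (hb : 0 < b)
    {R : Matrix (Fin m) (Fin n) ℂ} {c : Fin b → Fin n}
    {U : Matrix (Fin (m - s)) (Fin (m - s)) ℂ} (hU : U ∈ unitaryGroup (Fin (m - s)) ℂ)
    {σ : Equiv.Perm (Fin b)} {Rh : Matrix (Fin (m - s)) (Fin b) ℂ}
    (hRh : Rh = Uᴴ * R.submatrix (trailingRow s) c * σ.permMatrix ℂ) (hGB : IsGB 1 Rh)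
    (q : Fin b) :
    tailNorm R s (c q) ≤ ‖Rh ⟨0, Nat.sub_pos_of_lt hsm⟩ ⟨0, hb⟩‖ :=
  calc
    tailNorm R s (c q) = tailNorm (R.submatrix (trailingRow s) c) 0 q :=
      (tailNorm_zero_submatrix_trailingRow R s c q).symm
    _ = tailNorm (Uᴴ * R.submatrix (trailingRow s) c) 0 q :=
      (tailNorm_zero_unitary_mul (Unitary.star_mem hU) _ q).symm
    _ = tailNorm Rh 0 (σ q) := by rw [hRh, tailNorm_mul_permMatrix]
    _ ≤ ‖Rh ⟨0, Nat.sub_pos_of_lt hsm⟩ ⟨0, hb⟩‖ :=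
      hGB.tailNorm_le_norm_diag one_pos (Nat.sub_pos_of_lt hsm) hb (Nat.zero_le _)

end TailNorm

theorem commit_set_nonempty_general {m n s t b : ℕ} (hsm : s < m) (hb : 0 < b)
    {R₀ : Matrix (Fin m) (Fin n) ℂ} {c : Fin b → Fin n} {j₀ : Fin n} (hj₀ : j₀ ∈ Set.range c)
    (hj₀max : ∀ j : Fin n, s ≤ j.val → j.val < s + t →
        (tailNorm R₀ s j) ^ 2 ≤ (tailNorm R₀ s j₀) ^ 2)
    (hμ : ∀ j : Fin n, s + t ≤ j.val →
        (tailNorm R₀ 0 j) ^ 2 ≤ (tailNorm R₀ s j₀) ^ 2)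
    {U : Matrix (Fin (m - s)) (Fin (m - s)) ℂ} (hU : U ∈ unitaryGroup (Fin (m - s)) ℂ)
    {σ : Equiv.Perm (Fin b)} {Rh : Matrix (Fin (m - s)) (Fin b) ℂ}
    (hRh : Rh = Uᴴ * R₀.submatrix (trailingRow s) c * σ.permMatrix ℂ) (hGB : IsGB 1 Rh) :
    (∀ j : Fin n, s ≤ j.val → j.val < s + t →
        (tailNorm R₀ s j) ^ 2 ≤ ‖Rh ⟨0, Nat.sub_pos_of_lt hsm⟩ ⟨0, hb⟩‖ ^ 2) ∧
    (∀ j : Fin n, s + t ≤ j.val →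
        (tailNorm R₀ 0 j) ^ 2 ≤ ‖Rh ⟨0, Nat.sub_pos_of_lt hsm⟩ ⟨0, hb⟩‖ ^ 2) := by
  obtain ⟨q, rfl⟩ := hj₀
  have hpivot : (tailNorm R₀ s (c q)) ^ 2 ≤ ‖Rh ⟨0, Nat.sub_pos_of_lt hsm⟩ ⟨0, hb⟩‖ ^ 2 :=
    pow_le_pow_left₀ (tailNorm_nonneg R₀ s (c q))
      (tailNorm_le_norm_pivot_of_isGB_one hsm hb hU hRh hGB q) 2
  exact ⟨fun j hsj hjt => (hj₀max j hsj hjt).trans hpivot, fun j hj => (hμ j hj).trans hpivot⟩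

/-- **the commit set is nonempty.** Let `R₀ ∈ ℂ^{m×n}` be in GB(s) form with
`s + t ≤ n`, and suppose the maximal squared residual norm over the tracked columns
`{s+1,…,s+t}` — attained at a column `j₀` belonging to the candidate set `C ⊆ {s+1,…,s+t}`
of size `b` — is at least the maximal squared column norm `μ` over the untracked columns
`j > s+t`. Let `B ∈ ℂ^{(m−s)×b}` be the submatrix of `R₀` with rows `(s+1):m` and columns
indexed by `C`. If `Ū` is unitary, `Π_b` a permutation matrix, and `R̂ = Ūᴴ B Π_b` is in GB(1)
form, then `|R̂(1,1)|² ≥ δ` and `|R̂(1,1)|² ≥ μ`, where `δ` is the maximal squared residual norm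
over non-candidate tracked columns (`0` if there are none). -/
theorem commit_set_nonempty {m n s t b : ℕ} (hsm : s < m) (hst : s + t ≤ n)
    (R₀ : Matrix (Fin m) (Fin n) ℂ) (hGB : IsGB s R₀)
    (C : Finset (Fin n)) (hb : C.card = b) (hb0 : 0 < b)
    (hCsub : ∀ j ∈ C, s ≤ j.val ∧ j.val < s + t)
    (j₀ : Fin n) (hj₀C : j₀ ∈ C)
    (hj₀max : ∀ j : Fin n, s ≤ j.val → j.val < s + t →
        (tailNorm R₀ s j) ^ 2 ≤ (tailNorm R₀ s j₀) ^ 2)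
    (hμ : ∀ j : Fin n, s + t ≤ j.val →
        (tailNorm R₀ 0 j) ^ 2 ≤ (tailNorm R₀ s j₀) ^ 2)
    (U : Matrix (Fin (m - s)) (Fin (m - s)) ℂ)
    (hU : U ∈ Matrix.unitaryGroup (Fin (m - s)) ℂ)
    (σb : Equiv.Perm (Fin b))
    (Rh : Matrix (Fin (m - s)) (Fin b) ℂ)
    (hRh : Rh = Uᴴ * (Matrix.of fun (p : Fin (m - s)) (q : Fin b) =>
        R₀ ⟨s + p.val, by have := p.isLt; omega⟩ ((C.orderIsoOfFin hb q : Fin n))) *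
      σb.permMatrix ℂ)
    (hGB1 : IsGB 1 Rh) :
    (∀ j : Fin n, s ≤ j.val → j.val < s + t → j ∉ C →
        (tailNorm R₀ s j) ^ 2 ≤ ‖Rh ⟨0, by omega⟩ ⟨0, hb0⟩‖ ^ 2) ∧
    (∀ j : Fin n, s + t ≤ j.val →
        (tailNorm R₀ 0 j) ^ 2 ≤ ‖Rh ⟨0, by omega⟩ ⟨0, hb0⟩‖ ^ 2) := by
  obtain ⟨hδ, hμ'⟩ := commit_set_nonempty_general hsm hb0
    ((C.range_orderEmbOfFin hb).ge hj₀C) hj₀max hμ hU hRh hGB1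
  exact ⟨fun j hsj hjt _ => hδ j hsj hjt, hμ'⟩
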